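/- Let r ≥ 2 and let m, t be natural numbers with m ∣ t. Let x = (x_1,…,x_r) ∈ (ZMod m)^r and let d = gcd_m(x_1,…,x_r). Then there exists a matrix A ∈ GL_r(ZMod t) such that A·x (the action of A on x by matrix multiplication after entrywise reduction mod m) equals the vector whose first coordinate is the image of d in ZMod m and whose remaining coordinates are 0. -/

import Mathlib

/-- `gcd_m(x_1,…,x_r)`: the gcd of integer representatives of the entries of `x`
together with `m`.  (For `m = 0`, `ZMod 0 = ℤ` and `ZMod.val` is `Int.natAbs`.) -/
def gcdZMod {r m : ℕ} (x : Fin r → ZMod m) : ℕ :=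
  Nat.gcd m (Finset.univ.gcd fun i => (x i).val)

/-- The action of `A ∈ GL_r(ZMod t)` on `(ZMod m)^r` (for `m ∣ t`): reduce the
entries of `A` along `ZMod t → ZMod m` and multiply the column vector. -/
def glAction {r m t : ℕ} (hmt : m ∣ t) (A : Matrix.GeneralLinearGroup (Fin r) (ZMod t))
    (x : Fin r → ZMod m) : Fin r → ZMod m :=
  ((A : Matrix (Fin r) (Fin r) (ZMod t)).map (ZMod.castHom hmt (ZMod m))).mulVec x

/-!
Over a principal ideal domain `R`, a vector `y` with `φ y = 1` for some functional `φ` extends to a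
basis, since `ker φ` is free and complements `y`. So `GL` acts transitively on such vectors and,
after dividing by a generator, two vectors whose entries generate the same ideal are in one orbit.

This descends along a surjection `f : R →+* S`, provided that there are at least two coordinates:
a vector over `S` can then be lifted to one whose entries generate the whole preimage of the
original ideal. Indeed `GL` moves an arbitrary lift to `g • eᵢ`, and adding `m • eⱼ` with
`ker f = (m)` and `j ≠ i` changes nothing over `S` but enlarges the ideal from `(g)` to `(g, m)`.
Over `R = ℤ` and `S = ZMod m` this applies to `x` and `d • e₀`, and the integral matrix so obtained
can be reduced modulo every multiple `t` of `m`.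
-/

open Matrix

section UnimodularVectors

variable {R M : Type*} [CommRing R] [IsDomain R] [IsPrincipalIdealRing R] [AddCommGroup M]
  [Module R M] [Module.Free R M] [Module.Finite R M] {φ ψ : M →ₗ[R] R} {y z : M}

theorem exists_basis_apply_zero_eq_of_apply_eq_one (hφ : φ y = 1) :
    ∃ (n : ℕ) (b : Module.Basis (Fin (n + 1)) R M), b 0 = y := by
  obtain ⟨n, ⟨b⟩⟩ :=
    Submodule.nonempty_basis_of_pid (Module.Free.chooseBasis R M) (LinearMap.ker φ)
  have indep (c : R) (v : M) (hv : v ∈ LinearMap.ker φ) (h : c • y + v = 0) : c = 0 := by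
    simpa [hφ, LinearMap.mem_ker.mp hv] using congrArg φ h
  have spans (v : M) : ∃ c : R, v + c • y ∈ LinearMap.ker φ := ⟨-φ v, by simp [hφ]⟩
  exact ⟨n, .mkFinCons y b indep spans, by simp⟩

theorem exists_linearEquiv_apply_eq_of_apply_eq_one (hφ : φ y = 1) (hψ : ψ z = 1) :
    ∃ e : M ≃ₗ[R] M, e y = z := by
  obtain ⟨n, b, rfl⟩ := exists_basis_apply_zero_eq_of_apply_eq_one hφ
  obtain ⟨n', b', rfl⟩ := exists_basis_apply_zero_eq_of_apply_eq_one hψ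
  obtain rfl : n = n' := by simpa using Fintype.card_congr (b.indexEquiv b')
  exact ⟨b.equiv b' (.refl _), by simp⟩

end UnimodularVectors

section ContentIdeal

variable {R ι : Type*} [Semiring R]

theorem span_range_mulVec_le {κ : Type*} [Fintype κ] (A : Matrix ι κ R) (x : κ → R) :
    Ideal.span (Set.range (A *ᵥ x)) ≤ Ideal.span (Set.range x) := by
  rw [Ideal.span_le, Set.range_subset_iff]
  exact fun i => Ideal.sum_mem _ fun j _ =>
    Ideal.mul_mem_left _ _ (Ideal.subset_span (Set.mem_range_self j))

theorem span_range_single [DecidableEq ι] (i : ι) (a : R) :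
    Ideal.span (Set.range (Pi.single i a : ι → R)) = Ideal.span {a} := by
  refine le_antisymm ?_ ?_
  · rw [Ideal.span_le, Set.range_subset_iff]
    intro k
    obtain rfl | h := eq_or_ne k i
    · simp
    · simp [h]
  · exact (Ideal.span_singleton_le_iff_mem _).mpr (Ideal.subset_span ⟨i, by simp⟩)

theorem span_range_ite_val_eq_zero {r : ℕ} (hr : 0 < r) (a : R) :
    Ideal.span (Set.range fun i : Fin r => if (i : ℕ) = 0 then a else 0) = Ideal.span {a} := by
  rw [← span_range_single (⟨0, hr⟩ : Fin r) a]
  congr 2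
  ext i
  simp [Pi.single_apply, Fin.ext_iff]

theorem span_range_single_add_single [DecidableEq ι] {i j : ι} (hij : i ≠ j) (a b : R) :
    Ideal.span (Set.range (Pi.single i a + Pi.single j b : ι → R)) =
      Ideal.span {a} ⊔ Ideal.span {b} := by
  refine le_antisymm ?_ (sup_le ?_ ?_)
  · rw [Ideal.span_le, Set.range_subset_iff, ← span_range_single i a, ← span_range_single j b]
    exact fun k => Submodule.add_mem_sup
      (Ideal.subset_span (Set.mem_range_self k)) (Ideal.subset_span (Set.mem_range_self k))
  · exact (Ideal.span_singleton_le_iff_mem _).mpr (Ideal.subset_span ⟨i, by simp [hij]⟩)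
  · exact (Ideal.span_singleton_le_iff_mem _).mpr (Ideal.subset_span ⟨j, by simp [hij.symm]⟩)

end ContentIdeal

section Orbits

variable {R ι : Type*} [CommRing R]

theorem span_range_GL_mulVec [Fintype ι] [DecidableEq ι] (A : GL ι R) (x : ι → R) :
    Ideal.span (Set.range ((A : Matrix ι ι R) *ᵥ x)) = Ideal.span (Set.range x) := by
  refine (span_range_mulVec_le _ x).antisymm ?_
  simpa using span_range_mulVec_le (↑A⁻¹ : Matrix ι ι R) ((A : Matrix ι ι R) *ᵥ x)

theorem exists_eq_smul_of_span_range_eq_span_singleton [IsDomain R] [Finite ι] {x : ι → R}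
    {g : R} (hg : g ≠ 0) (hx : Ideal.span (Set.range x) = Ideal.span {g}) :
    ∃ (y : ι → R) (φ : (ι → R) →ₗ[R] R), x = g • y ∧ φ y = 1 := by
  cases nonempty_fintype ι
  have hdvd (i : ι) : g ∣ x i :=
    Ideal.mem_span_singleton.mp (hx ▸ Ideal.subset_span (Set.mem_range_self i))
  choose y hy using hdvd
  obtain ⟨c, hc⟩ : ∃ c : ι → R, ∑ i, c i * x i = g :=
    Ideal.mem_span_range_iff_exists_fun.mp (hx ▸ Ideal.mem_span_singleton_self g)
  refine ⟨y, Fintype.linearCombination R c, funext hy, mul_left_cancel₀ hg ?_⟩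
  calc g * Fintype.linearCombination R c y = ∑ i, c i * x i := by
        simp only [Fintype.linearCombination_apply, smul_eq_mul, Finset.mul_sum, hy]
        exact Finset.sum_congr rfl fun i _ => by ring
    _ = g * 1 := by rw [hc, mul_one]

theorem exists_GL_mulVec_eq_of_span_range_eq [IsDomain R] [IsPrincipalIdealRing R] [Fintype ι]
    [DecidableEq ι] {x y : ι → R} (h : Ideal.span (Set.range x) = Ideal.span (Set.range y)) :
    ∃ A : GL ι R, (A : Matrix ι ι R) *ᵥ x = y := by
  obtain ⟨g, hg : Ideal.span (Set.range y) = Ideal.span {g}⟩ :=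
    IsPrincipalIdealRing.principal (Ideal.span (Set.range y))
  obtain rfl | hg₀ := eq_or_ne g 0
  · have eq_zero {v : ι → R} (hv : Ideal.span (Set.range v) = Ideal.span {0}) : v = 0 := by
      simpa [Ideal.span_eq_bot, funext_iff] using hv
    exact ⟨1, by simp [eq_zero hg, eq_zero (h.trans hg)]⟩
  · obtain ⟨x', φ, rfl, hφ⟩ := exists_eq_smul_of_span_range_eq_span_singleton hg₀ (h.trans hg)
    obtain ⟨y', ψ, rfl, hψ⟩ := exists_eq_smul_of_span_range_eq_span_singleton hg₀ hg
    obtain ⟨e, rfl⟩ := exists_linearEquiv_apply_eq_of_apply_eq_one hφ hψ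
    refine ⟨GeneralLinearGroup.toLin.symm (.ofLinearEquiv e), ?_⟩
    rw [← mulVecLin_apply, ← GeneralLinearGroup.coe_toLin]
    simp

end Orbits

section Quotient

variable {R S ι : Type*} [CommRing R] [IsDomain R] [IsPrincipalIdealRing R] [CommRing S]
  [Nontrivial ι] {f : R →+* S}

theorem exists_lift_span_range_eq_comap [Finite ι] (hf : Function.Surjective f) (x : ι → S) :
    ∃ X : ι → R, f ∘ X = x ∧
      Ideal.span (Set.range X) = (Ideal.span (Set.range x)).comap f := by
  classical
  cases nonempty_fintype ι
  obtain ⟨X, rfl⟩ := hf.comp_left x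
  obtain ⟨i, j, hij⟩ := exists_pair_ne ι
  obtain ⟨g, hg : Ideal.span (Set.range X) = Ideal.span {g}⟩ :=
    IsPrincipalIdealRing.principal (Ideal.span (Set.range X))
  obtain ⟨m, hm : RingHom.ker f = Ideal.span {m}⟩ :=
    IsPrincipalIdealRing.principal (RingHom.ker f)
  have hfm : f m = 0 := RingHom.mem_ker.mp (hm ▸ Ideal.mem_span_singleton_self m)
  obtain ⟨A, rfl⟩ : ∃ A : GL ι R, (A : Matrix ι ι R) *ᵥ Pi.single i g = X :=
    exists_GL_mulVec_eq_of_span_range_eq ((span_range_single i g).trans hg.symm)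
  refine ⟨(A : Matrix ι ι R) *ᵥ (Pi.single i g + Pi.single j m), ?_, ?_⟩
  · ext k
    simp [mulVec_add, hfm]
  · rw [span_range_GL_mulVec, span_range_single_add_single hij, ← hg, ← hm, Set.range_comp,
      ← Ideal.map_span, Ideal.comap_map_of_surjective f hf, RingHom.ker_eq_comap_bot]

theorem exists_gl_action_eq_gcd_vector_general [Fintype ι] [DecidableEq ι]
    (hf : Function.Surjective f) {x y : ι → S}
    (h : Ideal.span (Set.range x) = Ideal.span (Set.range y)) :
    ∃ A : GL ι R, (A : Matrix ι ι R).map f *ᵥ x = y := by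
  obtain ⟨X, rfl, hX⟩ := exists_lift_span_range_eq_comap hf x
  obtain ⟨Y, rfl, hY⟩ := exists_lift_span_range_eq_comap hf y
  obtain ⟨A, rfl⟩ := exists_GL_mulVec_eq_of_span_range_eq (hX.trans (h ▸ hY.symm))
  exact ⟨A, funext fun i => (f.map_mulVec _ X i).symm⟩

end Quotient

theorem exists_natCast_mem_iff_dvd {S : Type*} [Ring S] (I : Ideal S) :
    ∃ n : ℕ, ∀ k : ℕ, (k : S) ∈ I ↔ n ∣ k := by
  obtain ⟨z, hz : I.comap (Int.castRingHom S) = Ideal.span {z}⟩ :=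
    IsPrincipalIdealRing.principal (I.comap (Int.castRingHom S))
  refine ⟨z.natAbs, fun k => ?_⟩
  rw [← Int.natCast_dvd_natCast, Int.natAbs_dvd, ← Ideal.mem_span_singleton, ← hz]
  simp

theorem associated_natCast_val {m : ℕ} (a : ZMod m) : Associated ((a.val : ℕ) : ZMod m) a := by
  cases m with
  | zero => exact (Int.associated_natAbs a).symm
  | succ m => rw [ZMod.natCast_zmod_val]

theorem span_range_eq_span_gcdZMod {r m : ℕ} (x : Fin r → ZMod m) :
    Ideal.span (Set.range x) = Ideal.span {((gcdZMod x : ℕ) : ZMod m)} := by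
  apply le_antisymm
  · rw [Ideal.span_le, Set.range_subset_iff]
    intro i
    have hdvd : gcdZMod x ∣ (x i).val :=
      (Nat.gcd_dvd_right _ _).trans (Finset.gcd_dvd (Finset.mem_univ i))
    exact Ideal.mem_span_singleton.mpr
      ((Nat.cast_dvd_cast hdvd).trans (associated_natCast_val (x i)).dvd)
  · obtain ⟨n, hn⟩ := exists_natCast_mem_iff_dvd (Ideal.span (Set.range x))
    have val_mem (i : Fin r) : (((x i).val : ℕ) : ZMod m) ∈ Ideal.span (Set.range x) :=
      Ideal.mem_of_dvd _ (associated_natCast_val (x i)).symm.dvd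
        (Ideal.subset_span (Set.mem_range_self i))
    rw [Ideal.span_singleton_le_iff_mem, hn]
    exact Nat.dvd_gcd ((hn m).mp (by simp)) (Finset.dvd_gcd fun i _ => (hn _).mp (val_mem i))

theorem glAction_map_intCast {r m t : ℕ} (hmt : m ∣ t) (A : GL (Fin r) ℤ) (x : Fin r → ZMod m) :
    glAction hmt (A.map (Int.castRingHom (ZMod t))) x =
      (A : Matrix (Fin r) (Fin r) ℤ).map (Int.castRingHom (ZMod m)) *ᵥ x := by
  rw [glAction]
  congr 1
  ext i j
  simp

theorem exists_gl_action_eq_gcd_vector (r m t : ℕ) (hr : 2 ≤ r) (hmt : m ∣ t)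
    (x : Fin r → ZMod m) :
    ∃ A : Matrix.GeneralLinearGroup (Fin r) (ZMod t),
      glAction hmt A x = fun i : Fin r => if (i : ℕ) = 0 then ((gcdZMod x : ℕ) : ZMod m) else 0 := by
  have : Nontrivial (Fin r) := Fin.nontrivial_iff_two_le.mpr hr
  obtain ⟨A, hA⟩ := exists_gl_action_eq_gcd_vector_general (f := Int.castRingHom (ZMod m))
    ZMod.intCast_surjective
    ((span_range_eq_span_gcdZMod x).trans (span_range_ite_val_eq_zero (by lia) _).symm)
  exact ⟨A.map (Int.castRingHom (ZMod t)), (glAction_map_intCast hmt A x).trans hA⟩
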